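/- Fix q ∈ ℂ with |q| > 1 and let Θ(x) = ∑_{n∈ℤ} q^{-n(n-1)/2} x^n for x ≠ 0. Then Θ is differentially algebraic over ℂ(x): there exist a natural number n and a nonzero polynomial P in n+2 variables with complex coefficients such that P(x, Θ(x), Θ'(x), …, Θ^{(n)}(x)) = 0 for every x ∈ ℂ with x ≠ 0. -/

import Mathlib

/-- The Jacobi theta function `Θ(x) = ∑_{n ∈ ℤ} q^{-n(n-1)/2} x^n`. -/
noncomputable def thetaQ (q x : ℂ) : ℂ :=
  ∑' n : ℤ, q ^ (-(n * (n - 1)) / 2) * x ^ n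

/-- The `n`-th Laurent coefficient of a function on the punctured plane, up to the factor `2π`,
computed on the circle of radius `R` about the origin. -/
noncomputable def circleCoeff (R : ℝ) (f : ℂ → ℂ) (n : ℤ) : ℂ :=
  ∫ θ in (0 : ℝ)..2 * Real.pi, circleMap 0 R θ ^ (-n) * f (circleMap 0 R θ)

theorem circleCoeff_eq_circleIntegral {R : ℝ} (hR : R ≠ 0) (f : ℂ → ℂ) (n : ℤ) :
    (∮ z in C(0, R), (z - 0)⁻¹ • (z ^ (-n) * f z)) = Complex.I * circleCoeff R f n := by
  rw [circleIntegral, circleCoeff, ← intervalIntegral.integral_const_mul]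
  congr 1
  ext θ
  have h : circleMap 0 R θ ≠ 0 := circleMap_ne_center hR
  simp only [deriv_circleMap, smul_eq_mul, sub_zero]
  field_simp

/-- The Laurent coefficients do not depend on the radius. -/
theorem circleCoeff_eq_of_le {r R : ℝ} (hr : 0 < r) (hrR : r ≤ R) {f : ℂ → ℂ}
    (hf : DifferentiableOn ℂ f {0}ᶜ) (n : ℤ) : circleCoeff R f n = circleCoeff r f n := by
  have hd : ∀ z : ℂ, z ≠ 0 → DifferentiableAt ℂ (fun z => z ^ (-n) * f z) z := fun z hz =>
    (differentiableAt_zpow.2 (Or.inl hz)).mul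
      (hf.differentiableAt (isOpen_compl_singleton.mem_nhds hz))
  have hne : ∀ z : ℂ, z ∉ Metric.ball 0 r → z ≠ 0 := by
    rintro z hz rfl
    exact hz (Metric.mem_ball_self hr)
  have key := Complex.circleIntegral_sub_center_inv_smul_eq_of_differentiable_on_annulus_off_countable
    (c := 0) hr hrR (f := fun z => z ^ (-n) * f z) Set.countable_empty
    (fun z hz => (hd z (hne z hz.2)).continuousAt.continuousWithinAt)
    (fun z hz => hd z (hne z fun h => hz.1.2 (Metric.ball_subset_closedBall h)))
  rw [circleCoeff_eq_circleIntegral hr.ne', circleCoeff_eq_circleIntegral (hr.trans_le hrR).ne']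
    at key
  exact mul_left_cancel₀ Complex.I_ne_zero key

theorem circleCoeff_norm_eq (q : ℂ) (f : ℂ → ℂ) (n : ℤ) :
    circleCoeff ‖q‖ f n = ∫ θ in (0 : ℝ)..2 * Real.pi,
      (q * circleMap 0 1 θ) ^ (-n) * f (q * circleMap 0 1 θ) := by
  have hrot : ∀ θ : ℝ, q * circleMap 0 1 θ = circleMap 0 ‖q‖ (θ + q.arg) := by
    intro θ
    conv_lhs => rw [← Complex.norm_mul_exp_arg_mul_I q]
    simp only [circleMap_zero, Complex.ofReal_add, Complex.ofReal_one, add_mul, Complex.exp_add]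
    ring
  simp only [hrot]
  have hp : Function.Periodic
      (fun θ => circleMap 0 ‖q‖ θ ^ (-n) * f (circleMap 0 ‖q‖ θ)) (2 * Real.pi) := by
    intro θ
    simp only [periodic_circleMap 0 ‖q‖ θ]
  rw [intervalIntegral.integral_comp_add_right
    (fun θ => circleMap 0 ‖q‖ θ ^ (-n) * f (circleMap 0 ‖q‖ θ)), circleCoeff, zero_add,
    add_comm (2 * Real.pi)]
  have := hp.intervalIntegral_add_eq 0 q.arg
  rwa [zero_add] at this

/-- A function on a circle all of whose Fourier coefficients vanish is zero. -/
theorem eq_zero_of_circleCoeff_eq_zero {f : ℂ → ℂ} (hf : ContinuousOn f {0}ᶜ) {x : ℂ}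
    (hx : x ≠ 0) (h : ∀ n, circleCoeff ‖x‖ f n = 0) : f x = 0 := by
  have : Fact (0 < 2 * Real.pi) := ⟨Real.two_pi_pos⟩
  have hx' : (‖x‖ : ℂ) ≠ 0 := by simpa using hx
  let g : C(AddCircle (2 * Real.pi), ℂ) :=
    ⟨fun t => f (‖x‖ * (AddCircle.toCircle t : ℂ)), by
      refine hf.comp_continuous (continuous_const.mul
        (continuous_subtype_val.comp AddCircle.continuous_toCircle)) fun t => ?_
      exact mul_ne_zero hx' (Circle.coe_ne_zero _)⟩
  have hg : ∀ θ : ℝ, g (θ : AddCircle (2 * Real.pi)) = f (circleMap 0 ‖x‖ θ) := by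
    intro θ
    change f (‖x‖ * (AddCircle.toCircle (θ : AddCircle (2 * Real.pi)) : ℂ)) = _
    rw [AddCircle.toCircle_apply_mk, div_self Real.two_pi_pos.ne', one_mul, Circle.coe_exp,
      circleMap_zero]
  have hcoeff : fourierCoeff g = 0 := by
    ext n
    have hterm : ∀ θ : ℝ, fourier (-n) (θ : AddCircle (2 * Real.pi)) • g (θ : AddCircle _)
        = (‖x‖ : ℂ) ^ n * (circleMap 0 ‖x‖ θ ^ (-n) * f (circleMap 0 ‖x‖ θ)) := by
      intro θ
      rw [hg, fourier_coe_apply, smul_eq_mul, circleMap_zero, mul_zpow, ← Complex.exp_int_mul,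
        ← mul_assoc, ← mul_assoc, ← zpow_add₀ hx', add_neg_cancel, zpow_zero, one_mul]
      congr 2
      have : (Real.pi : ℂ) ≠ 0 := by exact_mod_cast Real.pi_ne_zero
      push_cast
      field_simp
    rw [fourierCoeff_eq_intervalIntegral _ n 0, zero_add]
    simp only [hterm]
    rw [intervalIntegral.integral_const_mul]
    have := h n
    rw [circleCoeff] at this
    rw [this]
    simp
  have hsum := has_pointwise_sum_fourier_series_of_summable (f := g)
    (by rw [hcoeff]; exact summable_zero) (x.arg : AddCircle (2 * Real.pi))
  rw [hcoeff] at hsum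
  simp only [Pi.zero_apply, zero_smul] at hsum
  have := hsum.unique hasSum_zero
  rwa [hg, circleMap_zero, Complex.norm_mul_exp_arg_mul_I] at this

/-- A holomorphic function on the punctured plane with `f (q x) = (q x) ^ k f x`. -/
structure IsThetaOfWeight (q : ℂ) (k : ℕ) (f : ℂ → ℂ) : Prop where
  differentiableOn : DifferentiableOn ℂ f {0}ᶜ
  map_mul : ∀ x, x ≠ 0 → f (q * x) = (q * x) ^ k * f x

namespace IsThetaOfWeight

variable {q : ℂ} {k l : ℕ} {f g : ℂ → ℂ}

theorem mul (hf : IsThetaOfWeight q k f) (hg : IsThetaOfWeight q l g) :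
    IsThetaOfWeight q (k + l) (fun x => f x * g x) where
  differentiableOn := hf.differentiableOn.mul hg.differentiableOn
  map_mul x hx := by
    rw [hf.map_mul x hx, hg.map_mul x hx]
    ring

theorem pow (hf : IsThetaOfWeight q k f) (m : ℕ) :
    IsThetaOfWeight q (k * m) (fun x => f x ^ m) where
  differentiableOn := hf.differentiableOn.pow m
  map_mul x hx := by
    rw [hf.map_mul x hx]
    ring

theorem sum {ι : Type*} [Fintype ι] {F : ι → ℂ → ℂ} (hF : ∀ i, IsThetaOfWeight q k (F i))
    (c : ι → ℂ) : IsThetaOfWeight q k (fun x => ∑ i, c i * F i x) where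
  differentiableOn := DifferentiableOn.fun_sum fun i _ => (hF i).differentiableOn.const_mul (c i)
  map_mul x hx := by
    rw [Finset.mul_sum]
    refine Finset.sum_congr rfl fun i _ => ?_
    rw [(hF i).map_mul x hx]
    ring

theorem circleCoeff_one (hq : 1 < ‖q‖) (hf : IsThetaOfWeight q k f) (n : ℤ) :
    circleCoeff 1 f n = q ^ (k - n) * circleCoeff 1 f (n - k) := by
  have hq0 : q ≠ 0 := norm_pos_iff.1 (one_pos.trans hq)
  rw [← circleCoeff_eq_of_le one_pos hq.le hf.differentiableOn, circleCoeff_norm_eq, circleCoeff,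
    ← intervalIntegral.integral_const_mul]
  congr 1
  ext θ
  have hz : circleMap 0 1 θ ≠ 0 := circleMap_ne_center one_ne_zero
  rw [hf.map_mul _ hz, ← mul_assoc, ← zpow_natCast, ← zpow_add₀ (mul_ne_zero hq0 hz),
    ← mul_assoc, mul_zpow, neg_sub, neg_add_eq_sub]

theorem circleCoeff_one_eq_zero (hq : 1 < ‖q‖) (hf : IsThetaOfWeight q k f) (hk : 0 < k)
    (h : ∀ i : Fin k, circleCoeff 1 f (i : ℕ) = 0) (n : ℤ) : circleCoeff 1 f n = 0 := by
  have hq0 : q ≠ 0 := norm_pos_iff.1 (one_pos.trans hq)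
  have hk' : (0 : ℤ) < k := by exact_mod_cast hk
  have step : ∀ m : ℤ, circleCoeff 1 f (m + k) = 0 ↔ circleCoeff 1 f m = 0 := by
    intro m
    rw [hf.circleCoeff_one hq (m + k), add_sub_cancel_right, mul_eq_zero,
      or_iff_right (zpow_ne_zero _ hq0)]
  have all : ∀ j m : ℤ, circleCoeff 1 f (m + k * j) = 0 ↔ circleCoeff 1 f m = 0 := by
    intro j m
    induction j using Int.induction_on with
    | zero => simp
    | succ j ih => rw [← ih, ← step (m + k * j), mul_add, mul_one, add_assoc]
    | pred j ih => rw [← ih, ← step]; ring_nf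
  rw [← Int.emod_add_mul_ediv n k, all]
  have h0 := Int.emod_nonneg n hk'.ne'
  have h1 := Int.emod_lt_of_pos n hk'
  have := h ⟨(n % k).toNat, by omega⟩
  rwa [Fin.val_mk, Int.toNat_of_nonneg h0] at this

theorem eq_zero (hq : 1 < ‖q‖) (hf : IsThetaOfWeight q k f) (hk : 0 < k)
    (h : ∀ i : Fin k, circleCoeff 1 f (i : ℕ) = 0) {x : ℂ} (hx : x ≠ 0) : f x = 0 := by
  refine eq_zero_of_circleCoeff_eq_zero hf.differentiableOn.continuousOn hx fun n => ?_
  have h1 := hf.circleCoeff_one_eq_zero hq hk h n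
  rcases le_total 1 ‖x‖ with hx1 | hx1
  · rw [circleCoeff_eq_of_le one_pos hx1 hf.differentiableOn, h1]
  · rw [← circleCoeff_eq_of_le (norm_pos_iff.2 hx) hx1 hf.differentiableOn, h1]

theorem circleCoeff_one_sum {ι : Type*} [Fintype ι] {F : ι → ℂ → ℂ}
    (hF : ∀ i, IsThetaOfWeight q k (F i)) (c : ι → ℂ) (n : ℤ) :
    circleCoeff 1 (fun x => ∑ i, c i * F i x) n = ∑ i, c i * circleCoeff 1 (F i) n := by
  have hz : ∀ θ : ℝ, circleMap 0 1 θ ≠ 0 := fun θ => circleMap_ne_center one_ne_zero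
  have hcont : ∀ i, Continuous fun θ : ℝ => circleMap 0 1 θ ^ (-n) * F i (circleMap 0 1 θ) :=
    fun i => ((continuous_circleMap 0 1).zpow₀ _ fun θ => Or.inl (hz θ)).mul
      ((hF i).differentiableOn.continuousOn.comp_continuous (continuous_circleMap 0 1) hz)
  simp only [circleCoeff, ← intervalIntegral.integral_const_mul]
  rw [← intervalIntegral.integral_finsetSum fun i _ =>
    ((hcont i).const_mul (c i)).intervalIntegrable _ _]
  congr 1
  ext θ
  rw [Finset.mul_sum]
  exact Finset.sum_congr rfl fun i _ => by ring

/-- More than `k` theta functions of weight `k` are linearly dependent. -/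
theorem exists_relation (hq : 1 < ‖q‖) (hk : 0 < k) {ι : Type*} [Fintype ι] {F : ι → ℂ → ℂ}
    (hF : ∀ i, IsThetaOfWeight q k (F i)) (hcard : k < Fintype.card ι) :
    ∃ c : ι → ℂ, c ≠ 0 ∧ ∀ x, x ≠ 0 → ∑ i, c i * F i x = 0 := by
  let M : Matrix (Fin k) ι ℂ := Matrix.of fun j i => circleCoeff 1 (F i) (j : ℕ)
  have hker : LinearMap.ker M.mulVecLin ≠ ⊥ :=
    LinearMap.ker_ne_bot_of_finrank_lt (by simpa using hcard)
  obtain ⟨c, hc, hc0⟩ := Submodule.exists_mem_ne_zero_of_ne_bot hker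
  refine ⟨c, hc0, fun x hx => (sum hF c).eq_zero hq hk (fun j => ?_) hx⟩
  rw [circleCoeff_one_sum hF]
  have := congrFun (LinearMap.mem_ker.1 hc) j
  simpa [M, Matrix.mulVec, dotProduct, mul_comm] using this

end IsThetaOfWeight

theorem thetaQ_mul {q : ℂ} (hq : q ≠ 0) {x : ℂ} (hx : x ≠ 0) :
    thetaQ q (q * x) = q * x * thetaQ q x := by
  rw [thetaQ, thetaQ, ← tsum_mul_left, ← (Equiv.addRight (1 : ℤ)).tsum_eq]
  congr 1
  ext n
  have he : -((n + 1) * (n + 1 - 1)) / 2 + (n + 1) = -(n * (n - 1)) / 2 + 1 := by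
    rw [show -((n + 1) * (n + 1 - 1)) = -(n * (n - 1)) + -n * 2 by ring,
      Int.add_mul_ediv_right _ _ two_ne_zero]
    ring
  rw [Equiv.coe_addRight, mul_zpow, ← mul_assoc, ← zpow_add₀ hq, he, zpow_add_one₀ hq,
    zpow_add_one₀ hx]
  ring

theorem thetaQ_eq_jacobiTheta₂ {q x w : ℂ} (hq : q ≠ 0) (hw : Complex.exp w = x) :
    thetaQ q x = jacobiTheta₂ ((Complex.log q / 2 + w) / (2 * Real.pi * Complex.I))
      (-Complex.log q / (2 * Real.pi * Complex.I)) := by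
  rw [thetaQ, jacobiTheta₂]
  congr 1
  ext n
  have hpi : (Real.pi : ℂ) ≠ 0 := by exact_mod_cast Real.pi_ne_zero
  have he : (((-(n * (n - 1)) / 2 : ℤ)) : ℂ) = -(n * (n - 1)) / 2 := by
    rw [Int.cast_div ((Int.even_mul_pred_self n).two_dvd.neg_right) (by norm_num)]
    push_cast
    ring
  rw [jacobiTheta₂_term, ← hw, ← Complex.exp_int_mul]
  nth_rewrite 1 [← Complex.exp_log hq]
  rw [← Complex.exp_int_mul, ← Complex.exp_add, he]
  congr 1
  field_simp
  ring

theorem differentiableOn_thetaQ {q : ℂ} (hq : 1 < ‖q‖) : DifferentiableOn ℂ (thetaQ q) {0}ᶜ := by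
  intro x₀ (hx₀ : x₀ ≠ 0)
  have hq0 : q ≠ 0 := norm_pos_iff.1 (one_pos.trans hq)
  have hpi := Real.pi_pos
  have hτ : 0 < (-Complex.log q / (2 * Real.pi * Complex.I)).im := by
    have : -Complex.log q / (2 * Real.pi * Complex.I)
        = ((2 * Real.pi)⁻¹ : ℝ) * (Complex.log q * Complex.I) := by
      have hpi' : (Real.pi : ℂ) ≠ 0 := by exact_mod_cast hpi.ne'
      push_cast
      field_simp
      rw [Complex.I_sq]
      ring
    rw [this, Complex.im_ofReal_mul, Complex.mul_I_im, Complex.log_re]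
    exact mul_pos (by positivity) (Real.log_pos hq)
  have hlog : DifferentiableAt ℂ (fun x => (Complex.log q / 2 +
      (Complex.log x₀ + Complex.log (x / x₀))) / (2 * Real.pi * Complex.I)) x₀ := by
    refine (((DifferentiableAt.clog (by fun_prop) ?_).const_add _).const_add _).div_const _
    simp [div_self hx₀]
  refine (((differentiableAt_jacobiTheta₂_fst _ hτ).comp x₀ hlog).congr_of_eventuallyEq
    ?_).differentiableWithinAt
  filter_upwards [isOpen_compl_singleton.mem_nhds hx₀] with x (hx : x ≠ 0)
  refine thetaQ_eq_jacobiTheta₂ hq0 ?_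
  rw [Complex.exp_add, Complex.exp_log hx₀, Complex.exp_log (div_ne_zero hx hx₀)]
  field_simp

theorem differentiableOn_iteratedDeriv {f : ℂ → ℂ}
    {s : Set ℂ} (hs : IsOpen s) (hf : DifferentiableOn ℂ f s) (n : ℕ) :
    DifferentiableOn ℂ (iteratedDeriv n f) s := by
  induction n with
  | zero => rwa [iteratedDeriv_zero]
  | succ n ih => rw [iteratedDeriv_succ]; exact ih.deriv hs

/-- Iterating the derivative of the functional equation `f (q x) = q x f x`. -/
theorem iteratedDeriv_map_mul {q : ℂ} (hq : q ≠ 0) {f : ℂ → ℂ}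
    (hf : DifferentiableOn ℂ f {0}ᶜ) (h : ∀ x, x ≠ 0 → f (q * x) = q * x * f x) (n : ℕ) :
    ∀ x, x ≠ 0 → q ^ (n + 1) * iteratedDeriv (n + 1) f (q * x) =
      q * ((n + 1) * iteratedDeriv n f x + x * iteratedDeriv (n + 1) f x) := by
  have hd : ∀ m x, x ≠ 0 → HasDerivAt (iteratedDeriv m f) (iteratedDeriv (m + 1) f x) x := by
    intro m x hx
    rw [iteratedDeriv_succ]
    exact ((differentiableOn_iteratedDeriv isOpen_compl_singleton hf m).differentiableAt
      (isOpen_compl_singleton.mem_nhds hx)).hasDerivAt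
  have hl : ∀ m x, x ≠ 0 → HasDerivAt (fun x => q ^ m * iteratedDeriv m f (q * x))
      (q ^ (m + 1) * iteratedDeriv (m + 1) f (q * x)) x := by
    intro m x hx
    have := ((hd m (q * x) (mul_ne_zero hq hx)).comp x
      ((hasDerivAt_id x).const_mul q)).const_mul (q ^ m)
    convert! this using 1
    ring
  induction n with
  | zero =>
    intro x hx
    have h1 := hl 0 x hx
    have h2 : HasDerivAt (fun x => q * x * f x) _ x :=
      ((hasDerivAt_id x).const_mul q).mul (iteratedDeriv_zero (f := f) ▸ hd 0 x hx)
    have h3 := (h2.congr_of_eventuallyEq (f₁ := fun x => q ^ 0 * iteratedDeriv 0 f (q * x)) (by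
      filter_upwards [isOpen_compl_singleton.mem_nhds hx] with y hy
      simpa using h y hy)).unique h1
    rw [← h3]
    simp only [id, iteratedDeriv_zero]
    push_cast
    ring
  | succ n ih =>
    intro x hx
    have h1 := hl (n + 1) x hx
    have h2 := (((hd n x hx).const_mul ((n : ℂ) + 1)).add
      ((hasDerivAt_id x).mul (hd (n + 1) x hx))).const_mul q
    have h3 := (h1.congr_of_eventuallyEq (by
      filter_upwards [isOpen_compl_singleton.mem_nhds hx] with y hy
      exact (ih y hy).symm)).unique h2
    rw [h3]
    simp only [id]
    push_cast
    ring

theorem pow_mul_iteratedDeriv_thetaQ {q : ℂ} (hq : 1 < ‖q‖) {x : ℂ} (hx : x ≠ 0) (n : ℕ) :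
    (q * x) ^ (n + 1) * iteratedDeriv (n + 1) (thetaQ q) (q * x) =
      q * x ^ (n + 1) * ((n + 1) * iteratedDeriv n (thetaQ q) x +
        x * iteratedDeriv (n + 1) (thetaQ q) x) := by
  have hq0 : q ≠ 0 := norm_pos_iff.1 (one_pos.trans hq)
  have h := iteratedDeriv_map_mul hq0 (differentiableOn_thetaQ hq)
    (fun x hx => thetaQ_mul hq0 hx) n x hx
  linear_combination x ^ (n + 1) * h

/-- The numerator of `δ² log f = F / f²`, where `δ = x d/dx`, in terms of `x`, of `f`
and of its first two derivatives. -/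
def logDerivNumerator {R : Type*} [CommRing R] (x t₀ t₁ t₂ : R) : R :=
  t₀ * (x * t₁ + x ^ 2 * t₂) - (x * t₁) ^ 2

/-- The numerator of `δ³ log f = G / f³`, where `δ = x d/dx`, in terms of `x`, of `f`
and of its first three derivatives. -/
def logDerivNumerator' {R : Type*} [CommRing R] (x t₀ t₁ t₂ t₃ : R) : R :=
  t₀ ^ 2 * (x * t₁ + 3 * (x ^ 2 * t₂) + x ^ 3 * t₃)
    - 3 * t₀ * (x * t₁) * (x * t₁ + x ^ 2 * t₂) + 2 * (x * t₁) ^ 3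

theorem isThetaOfWeight_thetaQ {q : ℂ} (hq : 1 < ‖q‖) :
    IsThetaOfWeight q 1 (thetaQ q) :=
  ⟨differentiableOn_thetaQ hq, fun x hx => by
    rw [thetaQ_mul (norm_pos_iff.1 (one_pos.trans hq)) hx, pow_one]⟩

theorem isThetaOfWeight_logDerivNumerator {q : ℂ} (hq : 1 < ‖q‖) :
    IsThetaOfWeight q 2 (fun x => logDerivNumerator x (thetaQ q x)
      (iteratedDeriv 1 (thetaQ q) x) (iteratedDeriv 2 (thetaQ q) x)) where
  differentiableOn := by
    have h0 := differentiableOn_thetaQ hq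
    have h := differentiableOn_iteratedDeriv isOpen_compl_singleton h0
    have h1 := h 1
    have h2 := h 2
    unfold logDerivNumerator
    fun_prop
  map_mul x hx := by
    have hq0 : q ≠ 0 := norm_pos_iff.1 (one_pos.trans hq)
    have h1 := pow_mul_iteratedDeriv_thetaQ hq hx 0
    have h2 := pow_mul_iteratedDeriv_thetaQ hq hx 1
    simp only [Nat.reduceAdd, zero_add, pow_one, Nat.cast_zero, Nat.cast_one, one_mul,
      iteratedDeriv_zero] at h1 h2
    simp only [logDerivNumerator, h1, h2, thetaQ_mul hq0 hx]
    ring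

theorem isThetaOfWeight_logDerivNumerator' {q : ℂ} (hq : 1 < ‖q‖) :
    IsThetaOfWeight q 3 (fun x => logDerivNumerator' x (thetaQ q x)
      (iteratedDeriv 1 (thetaQ q) x) (iteratedDeriv 2 (thetaQ q) x)
      (iteratedDeriv 3 (thetaQ q) x)) where
  differentiableOn := by
    have h0 := differentiableOn_thetaQ hq
    have h := differentiableOn_iteratedDeriv isOpen_compl_singleton h0
    have h1 := h 1
    have h2 := h 2
    have h3 := h 3
    unfold logDerivNumerator'
    fun_prop
  map_mul x hx := by
    have hq0 : q ≠ 0 := norm_pos_iff.1 (one_pos.trans hq)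
    have h1 := pow_mul_iteratedDeriv_thetaQ hq hx 0
    have h2 := pow_mul_iteratedDeriv_thetaQ hq hx 1
    have h3 := pow_mul_iteratedDeriv_thetaQ hq hx 2
    simp only [Nat.reduceAdd, zero_add, pow_one, Nat.cast_zero, Nat.cast_one, Nat.cast_ofNat,
      one_mul, iteratedDeriv_zero] at h1 h2 h3
    simp only [logDerivNumerator', h1, h2, h3, thetaQ_mul hq0 hx]
    ring

/-- For `q ∈ ℂ` with `|q| > 1`, the Jacobi theta function is differentially algebraic over
`ℂ(x)`: there are `n : ℕ` and a nonzero polynomial `P` in `n + 2` variables over `ℂ` such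
that `P(x, Θ(x), Θ'(x), …, Θ⁽ⁿ⁾(x)) = 0` for every `x ≠ 0`. -/
theorem thetaQ_differentially_algebraic (q : ℂ) (hq : 1 < ‖q‖) :
    ∃ (n : ℕ) (P : MvPolynomial (Fin (n + 2)) ℂ), P ≠ 0 ∧
      ∀ x : ℂ, x ≠ 0 →
        MvPolynomial.eval
          (fun i : Fin (n + 2) =>
            if (i : ℕ) = 0 then x else iteratedDeriv ((i : ℕ) - 1) (thetaQ q) x) P = 0 := by
  let a : Fin 7 → ℕ := ![6, 4, 2, 0, 3, 1, 0]
  let b : Fin 7 → ℕ := ![0, 1, 2, 3, 0, 1, 0]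
  let d : Fin 7 → ℕ := ![0, 0, 0, 0, 1, 1, 2]
  have hw : ∀ i, 1 * a i + 2 * b i + 3 * d i = 6 := by decide
  obtain ⟨c, hc0, hc⟩ := IsThetaOfWeight.exists_relation hq (k := 6) (by norm_num)
    (fun i : Fin 7 => hw i ▸ (((isThetaOfWeight_thetaQ hq).pow (a i)).mul
      ((isThetaOfWeight_logDerivNumerator hq).pow (b i))).mul
      ((isThetaOfWeight_logDerivNumerator' hq).pow (d i))) (by simp)
  let P : MvPolynomial (Fin 5) ℂ := ∑ i, MvPolynomial.C (c i) * (MvPolynomial.X 1 ^ a i *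
    logDerivNumerator (.X 0) (.X 1) (.X 2) (.X 3) ^ b i *
    logDerivNumerator' (.X 0) (.X 1) (.X 2) (.X 3) (.X 4) ^ d i)
  have hP : ∀ v : Fin 5 → ℂ, MvPolynomial.eval v P = ∑ i, c i * (v 1 ^ a i *
      logDerivNumerator (v 0) (v 1) (v 2) (v 3) ^ b i *
      logDerivNumerator' (v 0) (v 1) (v 2) (v 3) (v 4) ^ d i) := by
    intro v
    simp [P, logDerivNumerator, logDerivNumerator']
  refine ⟨3, P, fun h0 => hc0 ?_, fun x hx => ?_⟩
  · have key : ∀ s t : ℂ, c 0 + c 1 * s + c 2 * s ^ 2 + c 3 * s ^ 3 + c 4 * t + c 5 * (s * t)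
        + c 6 * t ^ 2 = 0 := by
      intro s t
      have := hP ![1, 1, 0, s, t - 3 * s]
      rw [h0, map_zero] at this
      simp [Fin.sum_univ_succ, a, b, d, logDerivNumerator, logDerivNumerator'] at this
      linear_combination -this
    have h00 := key 0 0
    have h01 := key 0 1
    have h02 := key 0 (-1)
    have h10 := key 1 0
    have h20 := key (-1) 0
    have h30 := key 2 0
    have h11 := key 1 1
    have e0 : c 0 = 0 := by linear_combination h00
    have e4 : c 4 = 0 := by linear_combination (h01 - h02) / 2
    have e6 : c 6 = 0 := by linear_combination (h01 + h02) / 2 - h00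
    have e2 : c 2 = 0 := by linear_combination (h10 + h20) / 2 - h00
    have e3 : c 3 = 0 := by linear_combination (h30 - (h10 - h20)) / 6 - e0 / 6 - 4 * e2 / 6
    have e1 : c 1 = 0 := by linear_combination (h10 - h20) / 2 - e3
    have e5 : c 5 = 0 := by linear_combination h11 - e0 - e1 - e2 - e3 - e4 - e6
    ext i
    fin_cases i <;> simp [e0, e1, e2, e3, e4, e5, e6]
  · rw [hP, ← hc x hx]
    simp
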